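/- Let I be a set and U an ultrafilter over I, and suppose U-AC_I holds. Let {A_i : i ∈ I} be an I-indexed family of pairwise equipotent sets such that each A_i has at least two elements and ∏_{i∈I} A_i ≠ ∅. Then ∏_{i∈I} A_i/U has at least two elements; moreover, for any fixed f ∈ ∏_{i∈I} A_i there exists h ∈ ∏_{i∈I} A_i with [f] ≠ [h]. -/

import Mathlib

open Filter

universe u

/-- `U`-`AC_I`: for every `I`-indexed family of nonempty sets there is a function `f`
on `I` such that `{i ∈ I : f i ∈ A i} ∈ U`. -/
def UAC {I : Type u} (U : Ultrafilter I) : Prop :=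
  ∀ {α : Type u} (A : I → Set α), (∀ i, (A i).Nonempty) →
    ∃ f : I → α, {i | f i ∈ A i} ∈ U

/-- Assume `U`-`AC_I`. If `{A_i : i ∈ I}` is a family of pairwise
equipotent sets, each with at least two elements, whose product is nonempty, then the
quotient `∏ A_i/U` has at least two elements; moreover for every `f ∈ ∏ A_i` there is
`h ∈ ∏ A_i` with `[f] ≠ [h]`. -/
theorem quotient_nontrivial_of_uac {I : Type u} {α : Type u} (U : Ultrafilter I)
    (hUAC : UAC U) (A : I → Set α)
    (hequi : ∀ i j, Nonempty (↥(A i) ≃ ↥(A j)))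
    (htwo : ∀ i, (A i).Nontrivial)
    (hne : Nonempty (∀ i, A i)) :
    Nontrivial ((U : Filter I).Product fun i => ↥(A i)) ∧
      ∀ f : ∀ i, A i, ∃ h : ∀ i, A i,
        (↑f : (U : Filter I).Product fun i => ↥(A i)) ≠
          (↑h : (U : Filter I).Product fun i => ↥(A i)) := by
  have key : ∀ f : ∀ i, A i, ∃ h : ∀ i, A i,
      (↑f : (U : Filter I).Product fun i => ↥(A i)) ≠
        (↑h : (U : Filter I).Product fun i => ↥(A i)) := by
    classical
    intro f
    -- apply `U`-`AC_I` to the nonempty sets `A i \ {f i}`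
    obtain ⟨g, hg⟩ := hUAC (fun i => {x | x ∈ A i ∧ x ≠ f i})
      (fun i => (htwo i).exists_ne (f i))
    -- correct `g` by `f` where it fails to be in `A i`
    refine ⟨fun i => if hi : g i ∈ A i then ⟨g i, hi⟩ else f i, fun heq => ?_⟩
    have h1 := Quotient.exact heq
    have h2 : ∀ᶠ i in (U : Filter I),
        f i = (if hi : g i ∈ A i then ⟨g i, hi⟩ else f i : A i) := h1
    have h3 : ∀ᶠ i in (U : Filter I), g i ∈ A i ∧ g i ≠ f i := hg
    obtain ⟨i, hi, hgi, hne'⟩ := (h2.and h3).exists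
    rw [dif_pos hgi] at hi
    exact hne' (congrArg Subtype.val hi).symm
  refine ⟨?_, key⟩
  obtain ⟨f⟩ := hne
  obtain ⟨h, hh⟩ := key f
  exact ⟨⟨_, _, hh⟩⟩
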